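/- Perturbation bound for symplectic eigenvalues: let γ, γ' ∈ ℝ^{2n×2n} be positive definite with non-increasingly ordered symplectic eigenvalues d_j^↓(γ), d_j^↓(γ'). Then max_j |d_j^↓(γ) − d_j^↓(γ')| ≤ (‖γ‖^{1/2} + ‖γ'‖^{1/2}) · ‖γ − γ'‖^{1/2}. -/

import Mathlib

open scoped BigOperators Matrix

/-- `d : Fin n → ℝ` is a (Williamson) symplectic spectrum of a matrix
`M : Matrix (Fin n ⊕ Fin n) (Fin n ⊕ Fin n) ℝ` if there is a symplectic matrix
`S` with `S M Sᵀ = diag(d₁,…,dₙ,d₁,…,dₙ)`. -/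
def IsSymplecticSpectrum {n : ℕ}
    (M : Matrix (Fin n ⊕ Fin n) (Fin n ⊕ Fin n) ℝ) (d : Fin n → ℝ) : Prop :=
  ∃ S ∈ Matrix.symplecticGroup (Fin n) ℝ,
    S * M * Sᵀ = Matrix.diagonal (Sum.elim d d)

section helpers

open scoped Matrix.Norms.L2Operator MatrixOrder

/-- The norm of a real symmetric matrix is bounded by any bound on its eigenvalues. -/
lemma symm_norm_le {m : Type*} [Fintype m] [DecidableEq m] (H : Matrix m m ℝ)
    (hH : H.IsHermitian) (c : ℝ) (hc : 0 ≤ c) (h : ∀ i, |hH.eigenvalues i| ≤ c) : ‖H‖ ≤ c := by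
  rw [hH.spectral_theorem, Unitary.conjStarAlgAut_apply, ← Unitary.coe_star,
    CStarRing.norm_mul_coe_unitary, CStarRing.norm_coe_unitary_mul, Matrix.l2_opNorm_diagonal, pi_norm_le_iff_of_nonneg hc]
  intro i
  simpa using h i

lemma quad_le {m : Type*} [Fintype m] [DecidableEq m] (M : Matrix m m ℝ)
    (v : EuclideanSpace ℝ m) : |v.ofLp ⬝ᵥ M *ᵥ v.ofLp| ≤ ‖M‖ * ‖v‖ ^ 2 := by
  rw [← Matrix.inner_toEuclideanCLM]
  refine (abs_real_inner_le_norm _ _).trans ?_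
  have := (Matrix.toEuclideanCLM (𝕜 := ℝ) M).le_opNorm v
  rw [Matrix.l2_opNorm_toEuclideanCLM] at this
  nlinarith [norm_nonneg v]

/-- `‖A - B‖² ≤ ‖A² - B²‖` for positive semidefinite `A`, `B`. -/
lemma sqrt_diff {m : Type*} [Fintype m] [DecidableEq m] (A B : Matrix m m ℝ)
    (hA : A.PosSemidef) (hB : B.PosSemidef) : ‖A - B‖ ≤ √‖A * A - B * B‖ := by
  have hH : (A - B).IsHermitian := hA.1.sub hB.1
  refine symm_norm_le _ hH _ (Real.sqrt_nonneg _) fun i => ?_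
  apply Real.le_sqrt_of_sq_le
  rw [sq_abs]
  set l := hH.eigenvalues i
  set v := hH.eigenvectorBasis i with hv
  have hn : ‖v‖ = 1 := hH.eigenvectorBasis.norm_eq_one i
  have hnn : v.ofLp ⬝ᵥ v.ofLp = 1 := by
    have := real_inner_self_eq_norm_sq v
    rw [hn, EuclideanSpace.inner_eq_star_dotProduct] at this
    simpa using this
  have he : (A - B) *ᵥ v.ofLp = l • v.ofLp := hH.mulVec_eigenvectorBasis i
  have hq := quad_le (A * A - B * B) v
  rw [hn, one_pow, mul_one] at hq
  have h1 : v.ofLp ⬝ᵥ (A * A - B * B) *ᵥ v.ofLp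
      = l * (v.ofLp ⬝ᵥ A *ᵥ v.ofLp + v.ofLp ⬝ᵥ B *ᵥ v.ofLp) := by
    have : A * A - B * B = A * (A - B) + (A - B) * B := by noncomm_ring
    have h2 : v.ofLp ᵥ* (A - B) = l • v.ofLp := by
      rw [← he, ← Matrix.vecMul_transpose]
      congr 1
      simpa using hH.eq.symm
    rw [this, Matrix.add_mulVec, ← Matrix.mulVec_mulVec, ← Matrix.mulVec_mulVec, he,
      dotProduct_add, Matrix.dotProduct_mulVec _ (A - B), h2, Matrix.mulVec_smul]
    simp only [dotProduct_smul, smul_dotProduct, smul_eq_mul]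
    ring
  have ha : 0 ≤ v.ofLp ⬝ᵥ A *ᵥ v.ofLp := by simpa using hA.dotProduct_mulVec_nonneg v.ofLp
  have hb : 0 ≤ v.ofLp ⬝ᵥ B *ᵥ v.ofLp := by simpa using hB.dotProduct_mulVec_nonneg v.ofLp
  have hl : v.ofLp ⬝ᵥ A *ᵥ v.ofLp - v.ofLp ⬝ᵥ B *ᵥ v.ofLp = l := by
    rw [← dotProduct_sub, ← Matrix.sub_mulVec, he, dotProduct_smul, hnn]; simp
  rw [h1] at hq
  generalize v.ofLp ⬝ᵥ A *ᵥ v.ofLp = a at *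
  generalize v.ofLp ⬝ᵥ B *ᵥ v.ofLp = b at *
  rw [abs_le] at hq
  rcases le_total 0 l with h | h <;> nlinarith

lemma norm_sq_dot {m : Type*} [Fintype m] [DecidableEq m] (x : m → ℝ) :
    ‖WithLp.toLp 2 x‖ ^ 2 = x ⬝ᵥ x := by
  rw [← real_inner_self_eq_norm_sq, EuclideanSpace.inner_eq_star_dotProduct]
  simp

/-- Normal form of `A J A` where `A * A = γ`. -/
lemma normal_form {n : ℕ} (A : Matrix (Fin n ⊕ Fin n) (Fin n ⊕ Fin n) ℝ)
    (hA : A.PosSemidef) (hp : (A * A).PosDef) (d : Fin n → ℝ)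
    (hd : IsSymplecticSpectrum (A * A) d) :
    (∀ i, 0 < d i) ∧ ∃ O : Matrix (Fin n ⊕ Fin n) (Fin n ⊕ Fin n) ℝ, O * Oᵀ = 1 ∧
      (A * Matrix.J (Fin n) ℝ * A)ᵀ * (A * Matrix.J (Fin n) ℝ * A)
        = O * Matrix.diagonal (fun i => (Sum.elim d d i) ^ 2) * Oᵀ := by
  obtain ⟨S, hS, hSd⟩ := hd
  have hAt : Aᵀ = A := by simpa using hA.1.eq
  have hSu : IsUnit S := (Matrix.isUnit_iff_isUnit_det S).2 (SymplecticGroup.symplectic_det hS)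
  have hD : (Matrix.diagonal (Sum.elim d d) : Matrix (Fin n ⊕ Fin n) (Fin n ⊕ Fin n) ℝ).PosDef := by
    rw [← hSd]
    have := (Matrix.IsUnit.posDef_star_right_conjugate_iff (x := A * A) hSu).2 hp
    simpa [Matrix.star_eq_conjTranspose] using this
  have hpos : ∀ i, 0 < d i := fun i => by
    have := (Matrix.posDef_diagonal_iff.1 hD) (Sum.inl i)
    simpa using this
  refine ⟨hpos, ?_⟩
  set f : Fin n ⊕ Fin n → ℝ := Sum.elim d d with hf
  have hfp : ∀ i, 0 < f i := by rintro (i | i) <;> simp [f, hpos]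
  set R : Matrix (Fin n ⊕ Fin n) (Fin n ⊕ Fin n) ℝ := Matrix.diagonal (fun i => √(f i)) with hR
  set Q : Matrix (Fin n ⊕ Fin n) (Fin n ⊕ Fin n) ℝ := Matrix.diagonal (fun i => (√(f i))⁻¹) with hQ
  have hs : ∀ i, √(f i) ≠ 0 := fun i => (Real.sqrt_pos.2 (hfp i)).ne'
  have hRQ : R * Q = 1 := by
    simp [hR, hQ, Matrix.diagonal_mul_diagonal, hs]
  have hQR : Q * R = 1 := by
    simp [hR, hQ, Matrix.diagonal_mul_diagonal, hs]
  have hRR : R * R = Matrix.diagonal f := by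
    simp [hR, Matrix.diagonal_mul_diagonal, fun i => Real.mul_self_sqrt (hfp i).le]
  have hRt : Rᵀ = R := by simp [hR]
  have hQt : Qᵀ = Q := by simp [hQ]
  set J := Matrix.J (Fin n) ℝ with hJ
  have hJR : R * J = J * R := by
    ext i j
    rw [hR, Matrix.diagonal_mul, Matrix.mul_diagonal, hJ, Matrix.J]
    rcases i with i | i <;> rcases j with j | j <;> simp [f, Matrix.one_apply] <;>
      · split_ifs with h <;> simp [h]
  have hJJ : Jᵀ * J = 1 := by simp [hJ, Matrix.J_transpose, Matrix.J_squared]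
  have hSJ : Sᵀ * J * S = J := SymplecticGroup.mem_iff'.1 hS
  set O := A * Sᵀ * Q with hO
  have hOt : Oᵀ = Q * S * A := by simp [hO, Matrix.transpose_mul, hQt, hAt, Matrix.mul_assoc]
  have hOO : Oᵀ * O = 1 := by
    calc Oᵀ * O = Q * (S * (A * A) * Sᵀ) * Q := by rw [hOt, hO]; simp only [Matrix.mul_assoc]
      _ = (Q * R) * (R * Q) := by rw [hSd, ← hRR]; simp only [Matrix.mul_assoc]
      _ = 1 := by rw [hRQ, hQR, one_mul]
  have h1 : A * Sᵀ = O * R := by rw [hO, Matrix.mul_assoc, hQR, mul_one]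
  have h2 : S * A = R * Oᵀ := by
    rw [hOt, ← Matrix.mul_assoc, ← Matrix.mul_assoc, hRQ, one_mul]
  have hK : A * J * A = O * (J * Matrix.diagonal f) * Oᵀ := by
    calc A * J * A = (A * Sᵀ) * J * (S * A) := by
          conv_lhs => rw [← hSJ]
          simp only [Matrix.mul_assoc]
      _ = O * (R * J) * R * Oᵀ := by rw [h1, h2]; simp only [Matrix.mul_assoc]
      _ = O * (J * Matrix.diagonal f) * Oᵀ := by
          rw [hJR, ← hRR]; simp only [Matrix.mul_assoc]
  refine ⟨O, mul_eq_one_comm.1 hOO, ?_⟩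
  rw [hK]
  calc (O * (J * Matrix.diagonal f) * Oᵀ)ᵀ * (O * (J * Matrix.diagonal f) * Oᵀ)
      = O * (Matrix.diagonal f * (Jᵀ * ((Oᵀ * O) * J)) * Matrix.diagonal f) * Oᵀ := by
        simp only [Matrix.transpose_mul, Matrix.transpose_transpose, Matrix.diagonal_transpose,
          Matrix.mul_assoc]
    _ = _ := by
        rw [hOO, one_mul, hJJ, mul_one, Matrix.diagonal_mul_diagonal]
        simp only [sq]

lemma norm_K {m : Type*} [Fintype m] [DecidableEq m] (K O : Matrix m m ℝ) (f : m → ℝ)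
    (hO : O * Oᵀ = 1) (hK : Kᵀ * K = O * Matrix.diagonal (fun i => f i ^ 2) * Oᵀ) (x : m → ℝ) :
    ‖WithLp.toLp 2 (K *ᵥ x)‖ ^ 2 = ∑ i, f i ^ 2 * (Oᵀ *ᵥ x) i ^ 2 ∧
    ‖WithLp.toLp 2 x‖ ^ 2 = ∑ i, (Oᵀ *ᵥ x) i ^ 2 := by
  have key : ∀ M : Matrix m m ℝ, (M *ᵥ x) ⬝ᵥ (M *ᵥ x) = x ⬝ᵥ (Mᵀ * M) *ᵥ x := fun M => by
    rw [← Matrix.mulVec_mulVec, Matrix.dotProduct_mulVec x, Matrix.vecMul_transpose]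
  constructor
  · rw [norm_sq_dot, key, hK, ← Matrix.mulVec_mulVec, ← Matrix.mulVec_mulVec,
      Matrix.dotProduct_mulVec, ← Matrix.mulVec_transpose]
    simp only [dotProduct, Matrix.mulVec_diagonal]
    exact Finset.sum_congr rfl fun i _ => by ring
  · have := key Oᵀ
    rw [Matrix.transpose_transpose, hO, Matrix.one_mulVec] at this
    rw [norm_sq_dot, ← this]
    simp only [dotProduct, sq]

/-- Weyl-type inequality by dimension counting. -/
lemma weyl {n : ℕ} (K K' O O' : Matrix (Fin n ⊕ Fin n) (Fin n ⊕ Fin n) ℝ) (d e : Fin n → ℝ)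
    (hd : Antitone d) (he : Antitone e) (hd0 : ∀ i, 0 < d i) (he0 : ∀ i, 0 < e i)
    (hO : O * Oᵀ = 1) (hO' : O' * O'ᵀ = 1)
    (hK : Kᵀ * K = O * Matrix.diagonal (fun i => (Sum.elim d d i) ^ 2) * Oᵀ)
    (hK' : K'ᵀ * K' = O' * Matrix.diagonal (fun i => (Sum.elim e e i) ^ 2) * O'ᵀ) (j : Fin n) :
    d j - e j ≤ ‖K - K'‖ := by
  let idx : Fin n ⊕ Fin n → Fin n := Sum.elim id id
  let N : Matrix {i // idx i ≠ j} (Fin n ⊕ Fin n) ℝ :=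
    fun i k => if j < idx i then Oᵀ i k else O'ᵀ i k
  have hker : LinearMap.ker (Matrix.mulVecLin N) ≠ ⊥ := by
    apply LinearMap.ker_ne_bot_of_finrank_lt
    rw [Module.finrank_fintype_fun_eq_card, Module.finrank_fintype_fun_eq_card]
    exact Fintype.card_subtype_lt (x := Sum.inl j) (by simp [idx])
  obtain ⟨x, hx, hx0⟩ := Submodule.exists_mem_ne_zero_of_ne_bot hker
  have hN : ∀ i, idx i ≠ j → (if j < idx i then (Oᵀ *ᵥ x) i else (O'ᵀ *ᵥ x) i) = 0 := by
    intro i hi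
    have := congrFun (LinearMap.mem_ker.1 hx) ⟨i, hi⟩
    refine Eq.trans ?_ this
    change _ = ∑ k, (if j < idx i then Oᵀ i k else O'ᵀ i k) * x k
    split_ifs <;> rfl
  have hxp : 0 < ‖WithLp.toLp 2 x‖ := by
    rw [norm_pos_iff]; simpa using hx0
  obtain ⟨a1, a2⟩ := norm_K K O _ hO hK x
  obtain ⟨b1, b2⟩ := norm_K K' O' _ hO' hK' x
  have hlow : d j * ‖WithLp.toLp 2 x‖ ≤ ‖WithLp.toLp 2 (K *ᵥ x)‖ := by
    refine (sq_le_sq₀ (mul_nonneg (hd0 j).le (norm_nonneg _)) (norm_nonneg _)).1 ?_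
    rw [mul_pow, a1, a2, Finset.mul_sum]
    refine Finset.sum_le_sum fun i _ => ?_
    by_cases h : j < idx i
    · have := hN i h.ne'
      rw [if_pos h] at this
      simp [this]
    · have h1 : d j ≤ Sum.elim d d i := by
        rcases i with i | i <;> exact hd (not_lt.1 h)
      have := (hd0 j).le
      gcongr
  have hup : ‖WithLp.toLp 2 (K' *ᵥ x)‖ ≤ e j * ‖WithLp.toLp 2 x‖ := by
    refine (sq_le_sq₀ (norm_nonneg _) (mul_nonneg (he0 j).le (norm_nonneg _))).1 ?_
    rw [mul_pow, b1, b2, Finset.mul_sum]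
    refine Finset.sum_le_sum fun i _ => ?_
    by_cases h : idx i < j
    · have := hN i h.ne
      rw [if_neg h.not_gt] at this
      simp [this]
    · have h1 : Sum.elim e e i ≤ e j := by
        rcases i with i | i <;> exact he (not_lt.1 h)
      have : 0 ≤ Sum.elim e e i := by rcases i with i | i <;> exact (he0 _).le
      gcongr
  have hop : ‖WithLp.toLp 2 ((K - K') *ᵥ x)‖ ≤ ‖K - K'‖ * ‖WithLp.toLp 2 x‖ := 
    Matrix.l2_opNorm_mulVec (K - K') (WithLp.toLp 2 x)
  have htri : ‖WithLp.toLp 2 (K *ᵥ x)‖ ≤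
      ‖WithLp.toLp 2 ((K - K') *ᵥ x)‖ + ‖WithLp.toLp 2 (K' *ᵥ x)‖ := by
    have : WithLp.toLp 2 (K *ᵥ x) = WithLp.toLp 2 ((K - K') *ᵥ x) + WithLp.toLp 2 (K' *ᵥ x) := by
      rw [← WithLp.toLp_add, ← Matrix.add_mulVec, sub_add_cancel]
    rw [this]
    exact norm_add_le _ _
  refine le_of_mul_le_mul_right ?_ hxp
  linarith

lemma norm_J_le {n : ℕ} : ‖Matrix.J (Fin n) ℝ‖ ≤ 1 := by
  have h : star (Matrix.J (Fin n) ℝ) * Matrix.J (Fin n) ℝ = 1 := by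
    rw [Matrix.star_eq_conjTranspose, Matrix.conjTranspose_eq_transpose_of_trivial]
    simp [Matrix.J_transpose, Matrix.J_squared]
  have h2 := CStarRing.norm_star_mul_self (x := Matrix.J (Fin n) ℝ)
  rw [h] at h2
  have h3 : ‖(1 : Matrix (Fin n ⊕ Fin n) (Fin n ⊕ Fin n) ℝ)‖ ≤ 1 := by
    rw [← Matrix.diagonal_one, Matrix.l2_opNorm_diagonal, pi_norm_le_iff_of_nonneg zero_le_one]
    simp
  nlinarith

lemma exists_root {m : Type*} [Fintype m] [DecidableEq m] (M : Matrix m m ℝ)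
    (hM : M.PosSemidef) : ∃ A : Matrix m m ℝ, A.PosSemidef ∧ A * A = M ∧ ‖A‖ = √‖M‖ := by
  have hp : (CFC.sqrt M).PosSemidef := Matrix.nonneg_iff_posSemidef.1 (CFC.sqrt_nonneg M)
  refine ⟨CFC.sqrt M, hp, CFC.sqrt_mul_sqrt_self M hM.nonneg, ?_⟩
  have h := CStarRing.norm_star_mul_self (x := CFC.sqrt M)
  rw [hp.1.isSelfAdjoint.star_eq,
    CFC.sqrt_mul_sqrt_self M hM.nonneg] at h
  rw [h, Real.sqrt_mul_self (norm_nonneg _)]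

lemma real_aux {a b h j s p q r t : ℝ} (ha : 0 ≤ a) (hb : 0 ≤ b) (hh : 0 ≤ h)
    (hj : j ≤ 1) (hs : h ≤ s) (t1 : p ≤ q * h) (t2 : q ≤ a * j) (t3 : r ≤ t * b)
    (t4 : t ≤ h * j) : p + r ≤ (a + b) * s := by
  have q1 : q ≤ a := by nlinarith
  have q2 : t ≤ s := by nlinarith
  have q3 : p ≤ a * s := by nlinarith
  have q4 : r ≤ s * b := by nlinarith
  linarith

lemma one_sided {n : ℕ}
    (A B : Matrix (Fin n ⊕ Fin n) (Fin n ⊕ Fin n) ℝ)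
    (hA : A.PosSemidef) (hB : B.PosSemidef) (hA' : (A * A).PosDef) (hB' : (B * B).PosDef)
    (d e : Fin n → ℝ)
    (hd : IsSymplecticSpectrum (A * A) d) (hdmono : Antitone d)
    (he : IsSymplecticSpectrum (B * B) e) (hemono : Antitone e) (j : Fin n) :
    |d j - e j| ≤ (‖A‖ + ‖B‖) * √‖A * A - B * B‖ := by
  obtain ⟨hd0, O, hO, hK⟩ := normal_form A hA hA' d hd
  obtain ⟨he0, O', hO', hK'⟩ := normal_form B hB hB' e he
  have h1 := weyl _ _ O O' d e hdmono hemono hd0 he0 hO hO' hK hK' j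
  have h2 := weyl _ _ O' O e d hemono hdmono he0 hd0 hO' hO hK' hK j
  rw [norm_sub_rev] at h2
  have h3 : |d j - e j| ≤ ‖A * Matrix.J (Fin n) ℝ * A - B * Matrix.J (Fin n) ℝ * B‖ :=
    abs_le.2 ⟨by linarith, h1⟩
  refine h3.trans ?_
  set J := Matrix.J (Fin n) ℝ
  have hJ : ‖J‖ ≤ 1 := norm_J_le
  have hs := sqrt_diff A B hA hB
  have : A * J * A - B * J * B = A * J * (A - B) + (A - B) * J * B := by noncomm_ring
  rw [this]
  have t1 : ‖A * J * (A - B)‖ ≤ ‖A * J‖ * ‖A - B‖ := norm_mul_le _ _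
  have t2 : ‖A * J‖ ≤ ‖A‖ * ‖J‖ := norm_mul_le _ _
  have t3 : ‖(A - B) * J * B‖ ≤ ‖(A - B) * J‖ * ‖B‖ := norm_mul_le _ _
  have t4 : ‖(A - B) * J‖ ≤ ‖A - B‖ * ‖J‖ := norm_mul_le _ _
  refine (norm_add_le _ _).trans ?_
  exact real_aux (norm_nonneg _) (norm_nonneg _) (norm_nonneg _) hJ hs t1 t2 t3 t4

lemma final_aux {n : ℕ}
    (γ γ' : Matrix (Fin n ⊕ Fin n) (Fin n ⊕ Fin n) ℝ)
    (hγ : γ.PosDef) (hγ' : γ'.PosDef)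
    (d e : Fin n → ℝ)
    (hd : IsSymplecticSpectrum γ d) (hdmono : Antitone d)
    (he : IsSymplecticSpectrum γ' e) (hemono : Antitone e) (j : Fin n) :
    |d j - e j| ≤ (√‖γ‖ + √‖γ'‖) * √‖γ - γ'‖ := by
  obtain ⟨A, hA, rfl, hAn⟩ := exists_root γ hγ.posSemidef
  obtain ⟨B, hB, rfl, hBn⟩ := exists_root γ' hγ'.posSemidef
  rw [← hAn, ← hBn]
  exact one_sided A B hA hB hγ hγ' d e hd hdmono he hemono j

end helpers

/-- Perturbation bound for symplectic eigenvalues. Let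
`γ, γ'` be positive definite `2n × 2n` real matrices with non-increasingly
ordered symplectic eigenvalues `d` and `e`. Then
`max_j |d_j − e_j| ≤ (‖γ‖^{1/2} + ‖γ'‖^{1/2})·‖γ − γ'‖^{1/2}` in spectral
norm. -/
theorem symplectic_eigenvalue_perturbation {n : ℕ}
    (γ γ' : Matrix (Fin n ⊕ Fin n) (Fin n ⊕ Fin n) ℝ)
    (hγ : γ.PosDef) (hγ' : γ'.PosDef)
    (d e : Fin n → ℝ)
    (hd : IsSymplecticSpectrum γ d) (hdmono : Antitone d)
    (he : IsSymplecticSpectrum γ' e) (hemono : Antitone e) :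
    ∀ j : Fin n, |d j - e j| ≤
      (Real.sqrt ‖Matrix.toEuclideanCLM (𝕜 := ℝ) γ‖ +
        Real.sqrt ‖Matrix.toEuclideanCLM (𝕜 := ℝ) γ'‖) *
        Real.sqrt ‖Matrix.toEuclideanCLM (𝕜 := ℝ) (γ - γ')‖ := by
  intro j
  exact final_aux γ γ' hγ hγ' d e hd hdmono he hemono j
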